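/- arXiv:2208.06929 — 2 statements merged into one kernel-verified Lean document; each statement's English description precedes it below -/
import Mathlib

section
/- Let A be a finite type and τ : ℕ → A a sequence. Suppose M ∈ ℕ is such that for every k ∈ ℕ, the number of words σ : Fin k → A that are infinitely recurring in τ is at most M. Then there exists m with 1 ≤ m ≤ M such that τ is eventually m-periodic, i.e., there is N ∈ ℕ with τ(n + m) = τ(n) for all n ≥ N. -/
/-- `σ` occurs in `τ` at position `i`. -/
def WordOccursAt {A : Type*} (τ : ℕ → A) {k : ℕ} (σ : Fin k → A) (i : ℕ) : Prop :=
  ∀ j : Fin k, τ (i + j) = σ j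

/-- `σ` is infinitely recurring in `τ`. -/
def InfRecurring {A : Type*} (τ : ℕ → A) {k : ℕ} (σ : Fin k → A) : Prop :=
  {i : ℕ | WordOccursAt τ σ i}.Infinite

lemma eventually_rec {A : Type*} [Fintype A] (τ : ℕ → A) (k : ℕ) :
    ∃ N : ℕ, ∀ n ≥ N, InfRecurring τ (fun j : Fin k => τ (n + j)) := by
  have hfin : (⋃ σ ∈ {σ : Fin k → A | ¬ InfRecurring τ σ}, {i : ℕ | WordOccursAt τ σ i}).Finite := by
    apply Set.Finite.biUnion (Set.toFinite _)
    intro σ hσ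
    exact Set.not_infinite.mp hσ
  obtain ⟨B, hB⟩ := hfin.bddAbove
  refine ⟨B + 1, fun n hn => ?_⟩
  by_contra h
  have : n ≤ B := hB (Set.mem_biUnion (x := fun j : Fin k => τ (n + j)) h (fun j => rfl))
  omega

/-- If at most `M` words of each length are infinitely recurring in `τ`,
then `τ` is eventually `m`-periodic for some `m` with `1 ≤ m ≤ M`. -/
theorem eventually_periodic_of_bounded_recurring_words
    {A : Type*} [Fintype A] (τ : ℕ → A) (M : ℕ)
    (hM : ∀ k : ℕ, {σ : Fin k → A | InfRecurring τ σ}.ncard ≤ M) :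
    ∃ m : ℕ, 1 ≤ m ∧ m ≤ M ∧ ∃ N : ℕ, ∀ n ≥ N, τ (n + m) = τ n := by
  obtain ⟨k, hk⟩ : ∃ k : ℕ, {σ : Fin (k+1) → A | InfRecurring τ σ}.ncard ≤
      {σ : Fin k → A | InfRecurring τ σ}.ncard := by
    by_contra! h
    have hs : StrictMono (fun k : ℕ => {σ : Fin k → A | InfRecurring τ σ}.ncard) :=
      strictMono_nat_of_lt_succ h
    have h1 := hs.le_apply (x := M + 1)
    have h2 := hM (M + 1)
    omega
  obtain ⟨N0, hN0⟩ := eventually_rec τ k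
  obtain ⟨N1, hN1⟩ := eventually_rec τ (k+1)
  set f : (Fin (k+1) → A) → (Fin k → A) := fun σ j => σ j.castSucc with hf
  have himg : {σ : Fin k → A | InfRecurring τ σ} ⊆ f '' {σ : Fin (k+1) → A | InfRecurring τ σ} := by
    intro σ hσ
    obtain ⟨i, hi, hiN⟩ := Set.Infinite.exists_gt hσ N1
    refine ⟨_, hN1 i hiN.le, ?_⟩
    funext j
    exact hi j
  have hinj : Set.InjOn f {σ : Fin (k+1) → A | InfRecurring τ σ} := by
    apply Set.injOn_of_ncard_image_eq _ (Set.toFinite _)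
    apply le_antisymm (Set.ncard_image_le (Set.toFinite _))
    exact hk.trans (Set.ncard_le_ncard himg (Set.toFinite _))
  set N := max N0 N1 with hN
  have step : ∀ a ≥ N, ∀ b ≥ N, (∀ j < k, τ (a + j) = τ (b + j)) → τ (a + k) = τ (b + k) := by
    intro a ha b hb h
    have h1 := hinj (hN1 a (by omega)) (hN1 b (by omega))
      (by funext j; exact h j j.2)
    simpa using congrFun h1 (Fin.last k)
  obtain ⟨i, j, hij, hjM, hw⟩ : ∃ i j, i < j ∧ j ≤ M ∧
      (fun l : Fin k => τ (N + i + l)) = (fun l : Fin k => τ (N + j + l)) := by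
    have hfin : {σ : Fin k → A | InfRecurring τ σ}.Finite := Set.toFinite _
    obtain ⟨x, hx, y, hy, hxy, he⟩ := Finset.exists_ne_map_eq_of_card_lt_of_maps_to
      (s := Finset.range (M+1)) (t := hfin.toFinset)
      (f := fun i => (fun l : Fin k => τ (N + i + l)))
      (by rw [← Set.ncard_eq_toFinset_card _ hfin, Finset.card_range]; have := hM k; omega)
      (by
        intro i _
        simpa using hN0 (N + i) (by omega))
    simp only [Finset.mem_range] at hx hy
    rcases lt_or_gt_of_ne hxy with h | h
    · exact ⟨x, y, h, by omega, he⟩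
    · exact ⟨y, x, h, by omega, he.symm⟩
  have key : ∀ t, τ (N + i + t) = τ (N + j + t) := by
    intro t
    induction t using Nat.strong_induction_on with
    | _ t ih =>
      by_cases ht : t < k
      · exact congrFun hw ⟨t, ht⟩
      · obtain ⟨s, rfl⟩ : ∃ s, t = s + k := ⟨t - k, by omega⟩
        have := step (N + i + s) (by omega) (N + j + s) (by omega) (by
          intro l hl
          have := ih (s + l) (by omega)
          simpa only [add_assoc] using this)
        simpa only [add_assoc] using this
  refine ⟨j - i, by omega, by omega, N + i, fun n hn => ?_⟩
  have := key (n - (N + i))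
  rw [show N + i + (n - (N + i)) = n by omega,
    show N + j + (n - (N + i)) = n + (j - i) by omega] at this
  exact this.symm
end

section
/- Let A be a finite type and τ : ℕ → A a sequence, and for each k let f_τ(k) be the (finite) number of words σ : Fin k → A that are infinitely recurring in τ. If f_τ(k) = f_τ(k+1) for some k, then every infinitely recurring word σ : Fin k → A has a unique infinitely recurring end extension of length k+1; that is, there is exactly one a ∈ A such that the word sending j < k to σ(j) and k to a is infinitely recurring in τ. -/
/-- If the numbers of infinitely recurring words of lengths `k` and `k+1`
coincide, then every infinitely recurring word of length `k` has a unique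
infinitely recurring end extension of length `k+1`. -/
theorem unique_infRecurring_extension
    {A : Type*} [Fintype A] (τ : ℕ → A) (k : ℕ)
    (h : {σ : Fin k → A | InfRecurring τ σ}.ncard
        = {σ : Fin (k + 1) → A | InfRecurring τ σ}.ncard)
    (σ : Fin k → A) (hσ : InfRecurring τ σ) :
    ∃! a : A, InfRecurring τ (Fin.snoc σ a) := by
  have ext : ∀ ρ : Fin k → A, InfRecurring τ ρ → ∃ a : A, InfRecurring τ (k := k + 1) (Fin.snoc ρ a) := by
    intro ρ hρ
    by_contra hcon
    push Not at hcon
    apply hρ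
    have hfin : (⋃ a : A, {i : ℕ | WordOccursAt τ (k := k + 1) (Fin.snoc ρ a) i}).Finite :=
      Set.finite_iUnion fun a => Set.not_infinite.1 (hcon a)
    refine hfin.subset ?_
    intro i hi
    refine Set.mem_iUnion.2 ⟨τ (i + k), ?_⟩
    intro j
    refine Fin.lastCases ?_ (fun j => ?_) j
    · simp
    · simpa using hi j
  have hinit : ∀ ρ : Fin (k + 1) → A, InfRecurring τ ρ →
      InfRecurring τ (fun j : Fin k => ρ j.castSucc) := by
    intro ρ hρ
    refine hρ.mono ?_
    intro i hi j
    simpa using hi j.castSucc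
  have hinj := Set.inj_on_of_surj_on_of_ncard_le
    (s := {σ : Fin (k + 1) → A | InfRecurring τ σ}) (t := {σ : Fin k → A | InfRecurring τ σ})
    (fun ρ _ => fun j : Fin k => ρ j.castSucc) (fun ρ hρ => hinit ρ hρ)
    (by
      intro ρ hρ
      obtain ⟨a, ha⟩ := ext ρ hρ
      exact ⟨_, ha, by funext j; simp⟩)
    h.ge
  obtain ⟨a, ha⟩ := ext σ hσ
  refine ⟨a, ha, ?_⟩
  intro b hb
  have := hinj hb ha (by funext j; simp)
  simpa using congrFun this (Fin.last k)
end
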